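/- For every integer k ≥ 3 and every real r with 0 < r ≤ 2^(k-1)·ln 2 − 2, the probability that a random k-CNF formula F_k(n, m) with m = ⌊rn⌋ clauses is satisfiable tends to 1 as n → ∞; that is, the ratio (number of satisfiable m-element subsets of the proper k-clauses on n variables) / C(2^k·C(n,k), m) tends to 1 as n → ∞. -/

import Mathlib

/-- A proper `k`-clause on `n` Boolean variables: a set of `k` literals
on `k` distinct variables.  A literal is a pair `(v, s)`. -/
def IsProperClause (n k : ℕ) (C : Finset (Fin n × Bool)) : Prop :=
  C.card = k ∧ (C.image Prod.fst).card = k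

/-- An assignment `σ` satisfies a clause if it satisfies at least one literal. -/
def SatisfiesClause {n : ℕ} (σ : Fin n → Bool) (C : Finset (Fin n × Bool)) : Prop :=
  ∃ l ∈ C, σ l.1 = l.2

/-- A formula (set of clauses) is satisfiable if some assignment satisfies every clause. -/
def IsSatisfiable {n : ℕ} (F : Finset (Finset (Fin n × Bool))) : Prop :=
  ∃ σ : Fin n → Bool, ∀ C ∈ F, SatisfiesClause σ C


lemma aux_pade (x : ℝ) (hx : 0 ≤ x) : Real.log (1 + x) ≤ x * (6 + x) / (6 + 4 * x) := by
  have hmono : MonotoneOn (fun x : ℝ => x * (6 + x) / (6 + 4 * x) - Real.log (1 + x)) (Set.Ici 0) := by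
    have hd : ∀ x : ℝ, 0 ≤ x → HasDerivAt (fun x : ℝ => x * (6 + x) / (6 + 4 * x) - Real.log (1 + x))
        (((1 * (6 + x) + x * 1) * (6 + 4 * x) - x * (6 + x) * (4 * 1)) / (6 + 4 * x) ^ 2 - 1 / (1 + x)) x := by
      intro x hx
      have h1 : HasDerivAt (fun x : ℝ => 6 + x) 1 x := (hasDerivAt_id x).const_add 6
      have h2 : HasDerivAt (fun x : ℝ => 6 + 4 * x) (4 * 1) x :=
        ((hasDerivAt_id x).const_mul 4).const_add 6
      have h3 : HasDerivAt (fun x : ℝ => 1 + x) 1 x := (hasDerivAt_id x).const_add 1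
      exact (((hasDerivAt_id x).mul h1).div h2 (by positivity)).sub (h3.log (by positivity))
    apply monotoneOn_of_deriv_nonneg (convex_Ici 0)
    · intro x hx
      exact (hd x hx).continuousAt.continuousWithinAt
    · intro x hx
      rw [interior_Ici] at hx
      exact (hd x (le_of_lt hx)).differentiableAt.differentiableWithinAt
    · intro x hx
      rw [interior_Ici] at hx
      have hx : 0 < x := hx
      rw [(hd x hx.le).deriv, sub_nonneg, div_le_div_iff₀ (by positivity) (by positivity)]
      have : 0 < x ^ 3 := by positivity
      nlinarith
  have := hmono (Set.mem_Ici.2 le_rfl) (Set.mem_Ici.2 hx) hx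
  simp only at this
  norm_num at this
  linarith

lemma aux_log_c (c x : ℝ) (hx : 0 ≤ x) (h : c * (6 + 4 * x) ≤ 3) :
    Real.log (1 + x) ≤ x - c * x ^ 2 := by
  refine (aux_pade x hx).trans ?_
  rw [div_le_iff₀ (by positivity)]
  have : 0 ≤ x ^ 2 * (3 - c * (6 + 4 * x)) := mul_nonneg (by positivity) (by linarith)
  nlinarith

/-- Partial sum of the series of the rate function. -/
noncomputable def auxPoly (x : ℝ) : ℝ :=
  x ^ 2 / 2 + x ^ 4 / 12 + x ^ 6 / 30 + x ^ 8 / 56 + x ^ 10 / 90 + x ^ 12 / 132 + x ^ 14 / 182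

lemma aux_rate (x : ℝ) (hx : 0 ≤ x) (hx1 : x ≤ 1) :
    auxPoly x ≤ Real.log 2 - Real.binEntropy ((1 - x) / 2) := by
  have hmono : MonotoneOn (fun x : ℝ => Real.log 2 - Real.binEntropy ((1 - x) / 2) - auxPoly x)
      (Set.Icc 0 1) := by
    have hp : ∀ x, HasDerivAt auxPoly (x + x ^ 3 / 3 + x ^ 5 / 5 + x ^ 7 / 7 + x ^ 9 / 9 + x ^ 11 / 11
        + x ^ 13 / 13) x := by
      intro x
      have := (((((((hasDerivAt_pow 2 x).div_const 2).add ((hasDerivAt_pow 4 x).div_const 12)).add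
        ((hasDerivAt_pow 6 x).div_const 30)).add ((hasDerivAt_pow 8 x).div_const 56)).add
        ((hasDerivAt_pow 10 x).div_const 90)).add ((hasDerivAt_pow 12 x).div_const 132)).add
        ((hasDerivAt_pow 14 x).div_const 182)
      refine HasDerivAt.congr_deriv this ?_
      norm_num
      ring
    have hd : ∀ x : ℝ, 0 < x → x < 1 →
        HasDerivAt (fun x : ℝ => Real.log 2 - Real.binEntropy ((1 - x) / 2) - auxPoly x)
        (- ((Real.log (1 - (1 - x) / 2) - Real.log ((1 - x) / 2)) * (-1 / 2)) -
          (x + x ^ 3 / 3 + x ^ 5 / 5 + x ^ 7 / 7 + x ^ 9 / 9 + x ^ 11 / 11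
        + x ^ 13 / 13)) x := by
      intro x h0 h1
      have h2 : HasDerivAt (fun x : ℝ => (1 - x) / 2) (-1 / 2) x :=
        ((hasDerivAt_id x).const_sub 1).div_const 2
      have h3 := Real.hasDerivAt_binEntropy (p := (1 - x) / 2) (by linarith) (by linarith)
      exact ((h3.comp x h2).const_sub _).sub (hp x)
    apply monotoneOn_of_deriv_nonneg (convex_Icc 0 1)
    · apply Continuous.continuousOn
      have : Continuous auxPoly := by unfold auxPoly; fun_prop
      have h2 := Real.binEntropy_continuous
      fun_prop
    · intro x hx
      rw [interior_Icc] at hx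
      exact (hd x hx.1 hx.2).differentiableAt.differentiableWithinAt
    · intro x hx
      rw [interior_Icc] at hx
      obtain ⟨h0, h1⟩ := hx
      rw [(hd x h0 h1).deriv]
      have hs := Real.hasSum_log_sub_log_of_abs_lt_one (x := x) (by rw [abs_lt]; constructor <;> linarith)
      have hle := sum_le_hasSum (Finset.range 7) (fun i _ => by positivity) hs
      simp only [Finset.sum_range_succ, Finset.sum_range_zero] at hle
      norm_num at hle
      have e1 : Real.log (1 - (1 - x) / 2) = Real.log (1 + x) - Real.log 2 := by
        rw [← Real.log_div (by linarith) (by norm_num)]; congr 1; ring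
      have e2 : Real.log ((1 - x) / 2) = Real.log (1 - x) - Real.log 2 := by
        rw [← Real.log_div (by linarith) (by norm_num)]
      rw [e1, e2]
      linarith
  have := hmono (Set.mem_Icc.2 ⟨le_rfl, zero_le_one⟩) (Set.mem_Icc.2 ⟨hx, hx1⟩) hx
  simp only at this
  have h0 : auxPoly 0 = 0 := by simp [auxPoly]
  rw [h0] at this
  norm_num at this
  rw [show (1 / 2 : ℝ) = 2⁻¹ by norm_num] at this
  simp at this
  linarith

lemma aux_bern (e : ℕ) (a x : ℝ) (ha : 0 < a) (hx : 0 ≤ x) :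
    a ^ e * (1 + e * (x / a - 1)) ≤ x ^ e := by
  have h := one_add_mul_le_pow (a := x / a - 1) (by have : 0 ≤ x / a := by positivity
                                                    linarith) e
  rw [add_sub_cancel, div_pow, le_div_iff₀ (by positivity)] at h
  linarith

lemma aux_key (k : ℕ) (hk : 3 ≤ k) (N : ℝ) (hN : (2:ℝ) ^ k - 1 - k - k * (k - 1) / 2 ≤ N)
    (r : ℝ) (hr0 : 0 < r) (hr : r ≤ 2 ^ (k - 1) * Real.log 2 - 2) (x : ℝ) (hx : 0 ≤ x) (hx1 : x ≤ 1) :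
    r * Real.log (1 + x ^ 3 / N) ≤ Real.log 2 - Real.binEntropy ((1 - x) / 2) - x ^ 2 / 1000 := by
  have hrate := aux_rate x hx hx1
  have hl2 := Real.log_two_lt_d9
  have hx3 : 0 ≤ x ^ 3 := by positivity
  have hx31 : x ^ 3 ≤ 1 := pow_le_one₀ hx hx1
  suffices h : r * Real.log (1 + x ^ 3 / N) ≤ auxPoly x - x ^ 2 / 1000 by linarith
  have hb := fun e => aux_bern e
  rcases Nat.lt_or_ge k 5 with h5 | h5
  · interval_cases k
    · norm_num at hN hr
      have h1 : x ^ 3 / N ≤ x ^ 3 := div_le_self hx3 hN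
      have h2 : Real.log (1 + x ^ 3 / N) ≤ x ^ 3 - 0.3 * (x ^ 3) ^ 2 :=
        (Real.log_le_log (by positivity) (by linarith)).trans
          (aux_log_c 0.3 (x ^ 3) hx3 (by linarith))
      have h0 : 0 ≤ x ^ 3 - 0.3 * (x ^ 3) ^ 2 := by nlinarith
      have h3 : r * Real.log (1 + x ^ 3 / N) ≤ 0.7726 * (x ^ 3 - 0.3 * (x ^ 3) ^ 2) :=
        (mul_le_mul_of_nonneg_left h2 hr0.le).trans (mul_le_mul_of_nonneg_right (by linarith) h0)
      refine h3.trans ?_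
      have b2 := aux_bern 2 0.81 x (by norm_num) hx
      have b4 := aux_bern 4 0.81 x (by norm_num) hx
      have hF : 0 ≤ 1 / 2 - 1 / 1000 + x ^ 2 / 12 - 0.7726 * (x - 0.3 * x ^ 4) := by
        norm_num at b2 b4
        linarith
      have hG : 0 ≤ x ^ 2 * (1 / 2 - 1 / 1000 + x ^ 2 / 12 - 0.7726 * (x - 0.3 * x ^ 4)) :=
        mul_nonneg (by positivity) hF
      have : 0 ≤ x ^ 6 / 30 + x ^ 8 / 56 + x ^ 10 / 90 + x ^ 12 / 132 + x ^ 14 / 182 := by positivity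
      unfold auxPoly
      linarith
    · norm_num at hN hr
      have h1 : x ^ 3 / N ≤ x ^ 3 / 5 := div_le_div_of_nonneg_left hx3 (by norm_num) hN
      have h2 : Real.log (1 + x ^ 3 / N) ≤ x ^ 3 / 5 - 0.44 * (x ^ 3 / 5) ^ 2 :=
        (Real.log_le_log (by positivity) (by linarith)).trans
          (aux_log_c 0.44 (x ^ 3 / 5) (by positivity) (by linarith))
      have h0 : 0 ≤ x ^ 3 / 5 - 0.44 * (x ^ 3 / 5) ^ 2 := by nlinarith
      have h3 : r * Real.log (1 + x ^ 3 / N) ≤ 3.5452 * (x ^ 3 / 5 - 0.44 * (x ^ 3 / 5) ^ 2) :=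
        (mul_le_mul_of_nonneg_left h2 hr0.le).trans (mul_le_mul_of_nonneg_right (by linarith) h0)
      refine h3.trans ?_
      have b2 := aux_bern 2 0.945 x (by norm_num) hx
      have b4 := aux_bern 4 0.945 x (by norm_num) hx
      have b6 := aux_bern 6 0.945 x (by norm_num) hx
      have b8 := aux_bern 8 0.945 x (by norm_num) hx
      have b10 := aux_bern 10 0.945 x (by norm_num) hx
      have b12 := aux_bern 12 0.945 x (by norm_num) hx
      have hF : 0 ≤ 1 / 2 - 1 / 1000 + x ^ 2 / 12 + x ^ 4 / 30 + x ^ 6 / 56 + x ^ 8 / 90 + x ^ 10 / 132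
          + x ^ 12 / 182 - 3.5452 * (x / 5 - 0.44 * x ^ 4 / 25) := by
        norm_num at b2 b4 b6 b8 b10 b12
        linarith
      have hG := mul_nonneg (sq_nonneg x) hF
      unfold auxPoly
      linarith
  · have hrN : r ≤ 0.57 * ((2:ℝ) ^ k - 1 - k - k * (k - 1) / 2) := by
      refine hr.trans ?_
      clear hr hN
      induction k, h5 using Nat.le_induction with
      | base => norm_num; linarith
      | succ k h5 ih =>
        have ih := ih (by omega)
        obtain ⟨j, rfl⟩ : ∃ j, k = j + 1 := ⟨k - 1, by omega⟩
        simp only [Nat.add_sub_cancel] at ih ⊢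
        have : (4:ℝ) ≤ j := by exact_mod_cast (by omega : 4 ≤ j)
        push_cast at ih ⊢
        rw [pow_succ] at ih
        rw [pow_succ (2:ℝ) (j+1), pow_succ (2:ℝ) j]
        nlinarith
    have hNpos : 0 < N := by linarith
    have hrN' : r ≤ 0.57 * N := by linarith
    have h2 : Real.log (1 + x ^ 3 / N) ≤ x ^ 3 / N := by
      have := Real.log_le_sub_one_of_pos (x := 1 + x ^ 3 / N) (by positivity)
      linarith
    have h3 : r * Real.log (1 + x ^ 3 / N) ≤ 0.57 * x ^ 3 := by
      calc _ ≤ r * (x ^ 3 / N) := mul_le_mul_of_nonneg_left h2 hr0.le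
        _ ≤ (0.57 * N) * (x ^ 3 / N) := mul_le_mul_of_nonneg_right hrN' (by positivity)
        _ = _ := by field_simp
    refine h3.trans ?_
    have hF : 0 ≤ 1 / 2 - 1 / 1000 + x ^ 2 / 12 - 0.57 * x := by nlinarith
    have hG := mul_nonneg (sq_nonneg x) hF
    have : 0 ≤ x ^ 6 / 30 + x ^ 8 / 56 + x ^ 10 / 90 + x ^ 12 / 132 + x ^ 14 / 182 := by positivity
    unfold auxPoly
    linarith

lemma aux_choose (n z : ℕ) (hn : 0 < n) (hz : z ≤ n) :
    (n.choose z : ℝ) ≤ Real.exp (n * Real.binEntropy ((z:ℝ) / n)) := by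
  have hn' : (0:ℝ) < n := by exact_mod_cast hn
  rcases Nat.eq_zero_or_pos z with rfl | hz0
  · simp
  rcases Nat.eq_or_lt_of_le hz with rfl | hzn
  · simp [div_self hn'.ne']
  have hz' : (0:ℝ) < z := by exact_mod_cast hz0
  have hzn' : (z:ℝ) < n := by exact_mod_cast hzn
  set p : ℝ := z / n with hp
  have hp0 : 0 < p := by positivity
  have hp1 : p < 1 := by rw [hp, div_lt_one hn']; exact hzn'
  have hq : 0 < 1 - p := by linarith
  have h1 : p ^ z * (1 - p) ^ (n - z) * n.choose z ≤ 1 := by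
    have h := add_pow p (1 - p) n
    rw [add_sub_cancel, one_pow] at h
    refine le_of_le_of_eq ?_ h.symm
    exact Finset.single_le_sum (f := fun z => p ^ z * (1 - p) ^ (n - z) * (n.choose z : ℝ))
      (fun i _ => by positivity) (Finset.mem_range.2 (by omega))
  have h2 : Real.exp (n * Real.binEntropy p) * (p ^ z * (1 - p) ^ (n - z)) = 1 := by
    have e1 : p ^ z = Real.exp (z * Real.log p) := by rw [Real.exp_nat_mul, Real.exp_log hp0]
    have e2 : (1 - p) ^ (n - z) = Real.exp ((n - z : ℕ) * Real.log (1 - p)) := by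
      rw [Real.exp_nat_mul, Real.exp_log hq]
    rw [e1, e2, ← Real.exp_add, ← Real.exp_add, Real.exp_eq_one_iff,
      Real.binEntropy_eq_negMulLog_add_negMulLog_one_sub, Real.negMulLog, Real.negMulLog,
      Nat.cast_sub hz]
    have : (z:ℝ) = n * p := by rw [hp]; field_simp
    rw [this]
    ring
  have h3 : 0 < p ^ z * (1 - p) ^ (n - z) := by positivity
  refine le_of_mul_le_mul_right ?_ h3
  rw [h2]; linarith

/-- Normalised second moment bound. -/
noncomputable def auxQ (N : ℝ) (n m : ℕ) : ℝ :=
  ∑ z ∈ Finset.range (n + 1), (n.choose z : ℝ) / 2 ^ n * (1 + |1 - 2 * (z:ℝ) / n| ^ 3 / N) ^ m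

lemma aux_Q_le (k : ℕ) (hk : 3 ≤ k) (N : ℝ) (hN : (2:ℝ) ^ k - 1 - k - k * (k - 1) / 2 ≤ N) (hN1 : 1 ≤ N)
    (r : ℝ) (hr0 : 0 < r) (hr : r ≤ 2 ^ (k - 1) * Real.log 2 - 2) (n m : ℕ) (hn : 0 < n)
    (hm : (m:ℝ) ≤ r * n) (t : ℝ) (ht : 0 < t) :
    auxQ N n m ≤ Real.exp (r * n * t ^ 3) + (n + 1) * Real.exp (- (n * t ^ 2 / 1000)) := by
  have hn' : (0:ℝ) < n := by exact_mod_cast hn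
  have hterm : ∀ z ∈ Finset.range (n + 1),
      (n.choose z : ℝ) / 2 ^ n * (1 + |1 - 2 * (z:ℝ) / n| ^ 3 / N) ^ m ≤
      (n.choose z : ℝ) / 2 ^ n * Real.exp (r * n * t ^ 3) + Real.exp (- (n * t ^ 2 / 1000)) := by
    intro z hz
    have hz : z ≤ n := by simpa [Nat.lt_succ_iff] using hz
    have hzn' : (z:ℝ) ≤ n := by exact_mod_cast hz
    have hfrac : (z:ℝ) / n ≤ 1 := by rw [div_le_one hn']; exact hzn'
    have hfrac0 : 0 ≤ (z:ℝ) / n := by positivity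
    have e2 : 1 - 2 * (z:ℝ) / n = 1 - 2 * ((z:ℝ) / n) := by ring
    set x : ℝ := |1 - 2 * (z:ℝ) / n| with hx
    have hx0 : 0 ≤ x := abs_nonneg _
    have hx1 : x ≤ 1 := by rw [hx, e2, abs_le]; constructor <;> linarith
    have hNpos : 0 < N := by linarith
    have hB : 0 < 1 + x ^ 3 / N := by positivity
    have hBe : (1 + x ^ 3 / N) ^ m = Real.exp (m * Real.log (1 + x ^ 3 / N)) := by
      rw [Real.exp_nat_mul, Real.exp_log hB]
    have hlog0 : 0 ≤ Real.log (1 + x ^ 3 / N) := Real.log_nonneg (by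
      have : 0 ≤ x ^ 3 / N := by positivity
      linarith)
    have hBe2 : (1 + x ^ 3 / N) ^ m ≤ Real.exp (r * n * Real.log (1 + x ^ 3 / N)) := by
      rw [hBe]; exact Real.exp_le_exp.2 (mul_le_mul_of_nonneg_right hm hlog0)
    rcases le_or_gt x t with hxt | hxt
    · have h1 : (1 + x ^ 3 / N) ^ m ≤ Real.exp (r * n * t ^ 3) := by
        refine hBe2.trans (Real.exp_le_exp.2 (mul_le_mul_of_nonneg_left ?_ (by positivity)))
        have h1 := Real.log_le_sub_one_of_pos hB
        have h2 : x ^ 3 / N ≤ x ^ 3 := div_le_self (by positivity) hN1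
        have h3 : x ^ 3 ≤ t ^ 3 := pow_le_pow_left₀ hx0 hxt 3
        linarith
      have h2 := mul_le_mul_of_nonneg_left h1 (by positivity : 0 ≤ (n.choose z : ℝ) / 2 ^ n)
      have h3 := Real.exp_pos (- (n * t ^ 2 / 1000))
      linarith
    · have hent : Real.binEntropy ((1 - x) / 2) = Real.binEntropy ((z:ℝ) / n) := by
        rcases abs_cases (1 - 2 * (z:ℝ) / n) with h | h
        · rw [hx, h.1, e2]; congr 1; ring
        · rw [hx, h.1, e2, ← Real.binEntropy_one_sub]; congr 1; ring
      have hkey := aux_key k hk N hN r hr0 hr x hx0 hx1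
      rw [hent] at hkey
      have h2n : (2:ℝ) ^ n = Real.exp (n * Real.log 2) := by
        rw [Real.exp_nat_mul, Real.exp_log (by norm_num)]
      have h1 : (n.choose z : ℝ) / 2 ^ n * (1 + x ^ 3 / N) ^ m ≤
          Real.exp (n * Real.binEntropy ((z:ℝ) / n)) / Real.exp (n * Real.log 2) *
            Real.exp (r * n * Real.log (1 + x ^ 3 / N)) := by
        rw [← h2n]
        exact mul_le_mul (div_le_div_of_nonneg_right (aux_choose n z hn hz) (by positivity)) hBe2
          (by positivity) (by positivity)
      rw [← Real.exp_sub, ← Real.exp_add] at h1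
      have h2 : Real.exp (n * Real.binEntropy ((z:ℝ) / n) - n * Real.log 2 +
          r * n * Real.log (1 + x ^ 3 / N)) ≤ Real.exp (- (n * t ^ 2 / 1000)) := by
        apply Real.exp_le_exp.2
        have h3 : t ^ 2 ≤ x ^ 2 := pow_le_pow_left₀ ht.le hxt.le 2
        have h4 := mul_le_mul_of_nonneg_left hkey hn'.le
        have h5 := mul_le_mul_of_nonneg_left h3 hn'.le
        linarith
      have h3 : 0 ≤ (n.choose z : ℝ) / 2 ^ n * Real.exp (r * n * t ^ 3) := by positivity
      linarith
  refine (Finset.sum_le_sum hterm).trans ?_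
  rw [Finset.sum_add_distrib, ← Finset.sum_mul, ← Finset.sum_div]
  have h := Nat.sum_range_choose n
  have h' : ∑ z ∈ Finset.range (n + 1), (n.choose z : ℝ) = 2 ^ n := by exact_mod_cast h
  rw [h', div_self (by positivity)]
  simp

open Filter Topology in
lemma aux_lim (r : ℝ) : Tendsto (fun n : ℕ => Real.exp (r * n * ((n:ℝ) ^ (-(2:ℝ)/5)) ^ 3) +
    (n + 1) * Real.exp (- (n * ((n:ℝ) ^ (-(2:ℝ)/5)) ^ 2 / 1000))) atTop (𝓝 1) := by
  have hA : Tendsto (fun n : ℕ => r * (n:ℝ) ^ (-((1:ℝ)/5))) atTop (𝓝 0) := by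
    have := ((tendsto_rpow_neg_atTop (by norm_num : (0:ℝ) < 1/5)).comp
      tendsto_natCast_atTop_atTop).const_mul r
    simpa using this
  have hB : Tendsto (fun n : ℕ => (n:ℝ) ^ ((1:ℝ)/5)) atTop atTop :=
    (tendsto_rpow_atTop (by norm_num : (0:ℝ) < 1/5)).comp tendsto_natCast_atTop_atTop
  have hC : Tendsto (fun y : ℝ => (y ^ 5 + 1) * Real.exp (- (1/1000) * y)) atTop (𝓝 0) := by
    have h1 := tendsto_rpow_mul_exp_neg_mul_atTop_nhds_zero 5 (1/1000) (by norm_num)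
    have h2 := tendsto_rpow_mul_exp_neg_mul_atTop_nhds_zero 0 (1/1000) (by norm_num)
    have h3 := h1.add h2
    simp only [add_zero, Real.rpow_zero] at h3
    refine h3.congr (fun y => ?_)
    rw [show (5:ℝ) = ((5:ℕ):ℝ) by norm_num, Real.rpow_natCast]
    ring
  have hD := (Real.continuous_exp.tendsto 0).comp hA
  have hE := hD.add (hC.comp hB)
  simp only [Real.exp_zero, add_zero] at hE
  refine hE.congr' ?_
  filter_upwards [eventually_gt_atTop 0] with n hn
  have hn' : (0:ℝ) < n := by exact_mod_cast hn
  have e1 : (n:ℝ) * ((n:ℝ) ^ (-(2:ℝ)/5)) ^ 3 = (n:ℝ) ^ (-((1:ℝ)/5)) := by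
    rw [← Real.rpow_natCast, ← Real.rpow_mul hn'.le]
    nth_rewrite 1 [← Real.rpow_one (n:ℝ)]
    rw [← Real.rpow_add hn']; norm_num
  have e2 : (n:ℝ) * ((n:ℝ) ^ (-(2:ℝ)/5)) ^ 2 = (n:ℝ) ^ ((1:ℝ)/5) := by
    rw [← Real.rpow_natCast, ← Real.rpow_mul hn'.le]
    nth_rewrite 1 [← Real.rpow_one (n:ℝ)]
    rw [← Real.rpow_add hn']; norm_num
  have e3 : ((n:ℝ) ^ ((1:ℝ)/5)) ^ 5 = n := by
    rw [← Real.rpow_natCast, ← Real.rpow_mul hn'.le]; norm_num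
  simp only [Function.comp]
  rw [e3, mul_assoc r, e1, e2]
  congr 3
  ring

/-- Sign of a literal: `-1` if satisfied, `1` otherwise. -/
noncomputable def auxS {n : ℕ} (σ : Fin n → Bool) (l : Fin n × Bool) : ℝ :=
  if σ l.1 = l.2 then -1 else 1

/-- Number of subsets of size at least three. -/
noncomputable def auxN (k : ℕ) : ℝ :=
  ((Finset.univ.filter (fun S : Finset (Fin k) => 3 ≤ S.card)).card : ℝ)

/-- Fourier coefficients of the weight function. -/
noncomputable def auxA {k : ℕ} (S : Finset (Fin k)) : ℝ :=
  if S = ∅ then 1 else if 3 ≤ S.card then -(1 / auxN k) else 0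

/-- Weight function. -/
noncomputable def auxF {n k : ℕ} (σ : Fin n → Bool) (c : Fin k → Fin n × Bool) : ℝ :=
  ∑ S : Finset (Fin k), auxA S * ∏ i, (if i ∈ S then auxS σ (c i) else 1)

/-- Overlap. -/
noncomputable def auxR {n : ℕ} (σ τ : Fin n → Bool) : ℝ :=
  (∑ v, (if σ v = τ v then (1:ℝ) else -1)) / n

lemma auxN_pos (k : ℕ) (hk : 3 ≤ k) : 1 ≤ auxN k := by
  unfold auxN
  exact_mod_cast Finset.card_pos.2 ⟨Finset.univ, by simpa using hk⟩

lemma auxN_ge (k : ℕ) : (2:ℝ) ^ k - 1 - k - k * (k - 1) / 2 ≤ auxN k := by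
  classical
  have h1 := Finset.card_filter_add_card_filter_not (s := (Finset.univ : Finset (Finset (Fin k))))
    (fun S => 3 ≤ S.card)
  have h2 : (Finset.univ.filter (fun S : Finset (Fin k) => ¬ 3 ≤ S.card)) ⊆
      (Finset.powersetCard 0 Finset.univ ∪ Finset.powersetCard 1 Finset.univ) ∪
        Finset.powersetCard 2 Finset.univ := by
    intro S hS
    simp only [Finset.mem_filter, Finset.mem_univ, true_and, Finset.mem_union,
      Finset.mem_powersetCard, Finset.subset_univ] at hS ⊢
    omega
  have h3 := (Finset.card_le_card h2).trans ((Finset.card_union_le _ _).trans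
    (Nat.add_le_add_right (Finset.card_union_le _ _) _))
  simp only [Finset.card_powersetCard, Finset.card_univ, Fintype.card_fin, Fintype.card_finset,
    Nat.choose_zero_right, Nat.choose_one_right] at h1 h3
  have h4 : ((k.choose 2 : ℕ) : ℝ) = k * (k - 1) / 2 := Nat.cast_choose_two ℝ k
  unfold auxN
  have h1' : ((Finset.univ.filter (fun S : Finset (Fin k) => 3 ≤ S.card)).card : ℝ) +
    ((Finset.univ.filter (fun S : Finset (Fin k) => ¬ 3 ≤ S.card)).card : ℝ) = 2 ^ k := by
    exact_mod_cast h1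
  have h3' : ((Finset.univ.filter (fun S : Finset (Fin k) => ¬ 3 ≤ S.card)).card : ℝ) ≤
      1 + k + (k.choose 2 : ℕ) := by exact_mod_cast h3
  rw [h4] at h3'
  linarith

lemma auxF_zero {n k : ℕ} (hk : 3 ≤ k) (σ : Fin n → Bool) (c : Fin k → Fin n × Bool)
    (h : ∀ i, σ (c i).1 ≠ (c i).2) : auxF σ c = 0 := by
  have hN := auxN_pos k hk
  unfold auxF
  have h1 : ∀ S : Finset (Fin k), auxA S * ∏ i, (if i ∈ S then auxS σ (c i) else 1) =
      (if S = ∅ then 1 else 0) + (if 3 ≤ S.card then -(1 / auxN k) else 0) := by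
    intro S
    have : ∏ i, (if i ∈ S then auxS σ (c i) else 1) = 1 :=
      Finset.prod_eq_one (fun i _ => by simp [auxS, h i])
    rw [this, mul_one]
    unfold auxA
    by_cases hS : S = ∅
    · subst hS; simp
    · simp [hS]
  rw [Finset.sum_congr rfl (fun S _ => h1 S), Finset.sum_add_distrib, ← Finset.sum_filter,
    ← Finset.sum_filter]
  simp only [Finset.sum_const, Finset.filter_eq', Finset.mem_univ, if_true, Finset.card_singleton]
  have : ((Finset.univ.filter (fun S : Finset (Fin k) => 3 ≤ S.card)).card : ℝ) = auxN k := rfl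
  rw [nsmul_eq_mul, nsmul_eq_mul, this]
  field_simp
  norm_num

lemma auxS_sum {n : ℕ} (σ : Fin n → Bool) : ∑ l, auxS σ l = 0 := by
  rw [Fintype.sum_prod_type]
  apply Finset.sum_eq_zero
  intro v _
  cases h : σ v <;> simp [auxS, h]

lemma auxS_sum2 {n : ℕ} (hn : 0 < n) (σ τ : Fin n → Bool) :
    ∑ l, auxS σ l * auxS τ l = 2 * n * auxR σ τ := by
  have hn' : (n:ℝ) ≠ 0 := by positivity
  rw [Fintype.sum_prod_type]
  unfold auxR
  rw [mul_assoc, mul_div_cancel₀ _ hn', Finset.mul_sum]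
  apply Finset.sum_congr rfl
  intro v _
  cases h : σ v <;> cases h' : τ v <;> simp [auxS, h, h'] <;> norm_num

lemma auxF_sum {n k : ℕ} (σ : Fin n → Bool) :
    ∑ c : Fin k → Fin n × Bool, auxF σ c = (2 * n : ℝ) ^ k := by
  classical
  unfold auxF
  rw [Finset.sum_comm]
  rw [Finset.sum_eq_single ∅]
  · simp [auxA]; ring
  · intro S _ hS
    rw [← Finset.mul_sum, ← Fintype.prod_sum (fun i l => if i ∈ S then auxS σ l else 1)]
    obtain ⟨i, hi⟩ := Finset.nonempty_iff_ne_empty.2 hS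
    rw [Finset.prod_eq_zero (Finset.mem_univ i), mul_zero]
    simp [hi, auxS_sum]
  · simp

lemma auxF_sum2 {n k : ℕ} (hn : 0 < n) (σ τ : Fin n → Bool) :
    ∑ c : Fin k → Fin n × Bool, auxF σ c * auxF τ c =
      (2 * n : ℝ) ^ k * ∑ S : Finset (Fin k), auxA S ^ 2 * auxR σ τ ^ S.card := by
  classical
  unfold auxF
  have h1 : ∀ S T : Finset (Fin k), ∑ c : Fin k → Fin n × Bool,
      (∏ i, (if i ∈ S then auxS σ (c i) else 1)) * (∏ i, (if i ∈ T then auxS τ (c i) else 1)) =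
      if S = T then (2 * n : ℝ) ^ k * auxR σ τ ^ S.card else 0 := by
    intro S T
    simp_rw [← Finset.prod_mul_distrib]
    rw [← Fintype.prod_sum (fun i l => (if i ∈ S then auxS σ l else 1) * (if i ∈ T then auxS τ l else 1))]
    split_ifs with hST
    · subst hST
      have : ∀ i, ∑ l, (if i ∈ S then auxS σ l else 1) * (if i ∈ S then auxS τ l else 1) =
          (2 * n : ℝ) * (if i ∈ S then auxR σ τ else 1) := by
        intro i
        by_cases hi : i ∈ S
        · simp [hi, auxS_sum2 hn]
        · simp [hi]; ring
      rw [Finset.prod_congr rfl (fun i _ => this i), Finset.prod_mul_distrib]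
      simp [Finset.prod_ite_mem]
    · have : ∃ i, ¬ (i ∈ S ↔ i ∈ T) := by
        by_contra hcon
        push Not at hcon
        exact hST (Finset.ext hcon)
      obtain ⟨i, hi⟩ := this
      apply Finset.prod_eq_zero (Finset.mem_univ i)
      by_cases h1 : i ∈ S <;> by_cases h2 : i ∈ T <;> simp_all [auxS_sum]
  simp_rw [Finset.sum_mul_sum]
  rw [Finset.sum_comm, Finset.mul_sum]
  apply Finset.sum_congr rfl
  intro S _
  rw [Finset.sum_comm, Finset.sum_eq_single S]
  · have := h1 S S
    rw [if_pos rfl] at this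
    simp_rw [mul_mul_mul_comm (auxA S)]
    rw [← Finset.mul_sum, this]; ring
  · intro T _ hT
    have := h1 S T
    rw [if_neg (Ne.symm hT)] at this
    simp_rw [mul_mul_mul_comm (auxA S)]
    rw [← Finset.mul_sum, this, mul_zero]
  · simp

lemma auxA_bound {k : ℕ} (hk : 3 ≤ k) (x : ℝ) (hx : |x| ≤ 1) :
    |∑ S : Finset (Fin k), auxA S ^ 2 * x ^ S.card| ≤ 1 + |x| ^ 3 / auxN k := by
  classical
  have hN := auxN_pos k hk
  refine (Finset.abs_sum_le_sum_abs _ _).trans ?_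
  have h1 : ∀ S : Finset (Fin k), |auxA S ^ 2 * x ^ S.card| ≤
      (if S = ∅ then 1 else 0) + (if 3 ≤ S.card then (1 / auxN k) ^ 2 * |x| ^ 3 else 0) := by
    intro S
    rw [abs_mul, abs_pow x, abs_of_nonneg (sq_nonneg _)]
    unfold auxA
    by_cases hS : S = ∅
    · subst hS; simp
    · by_cases h3 : 3 ≤ S.card
      · simp only [hS, h3, if_true, if_false, zero_add, neg_sq]
        exact mul_le_mul_of_nonneg_left (pow_le_pow_of_le_one (abs_nonneg _) hx h3) (by positivity)
      · simp [hS, h3]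
  refine (Finset.sum_le_sum (fun S _ => h1 S)).trans ?_
  rw [Finset.sum_add_distrib, ← Finset.sum_filter, ← Finset.sum_filter]
  simp only [Finset.sum_const, Finset.filter_eq', Finset.mem_univ, if_true, Finset.card_singleton]
  have : ((Finset.univ.filter (fun S : Finset (Fin k) => 3 ≤ S.card)).card : ℝ) = auxN k := rfl
  rw [nsmul_eq_mul, nsmul_eq_mul, this]
  apply le_of_eq
  field_simp
  norm_num

lemma auxR_eq {n : ℕ} (hn : 0 < n) (σ τ : Fin n → Bool) :
    auxR σ τ = 1 - 2 * ((Finset.univ.filter (fun v => σ v ≠ τ v)).card : ℝ) / n := by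
  have hn' : (n:ℝ) ≠ 0 := by positivity
  unfold auxR
  have : ∀ v, (if σ v = τ v then (1:ℝ) else -1) = 1 - 2 * (if σ v ≠ τ v then (1:ℝ) else 0) := by
    intro v
    by_cases h : σ v = τ v <;> simp [h]; norm_num
  rw [Finset.sum_congr rfl (fun v _ => this v), Finset.sum_sub_distrib, ← Finset.mul_sum,
    Finset.sum_boole]
  simp only [Finset.sum_const, Finset.card_univ, Fintype.card_fin, nsmul_eq_mul, mul_one]
  field_simp

lemma aux_count {n : ℕ} (τ : Fin n → Bool) (F : ℕ → ℝ) :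
    ∑ σ : Fin n → Bool, F (Finset.univ.filter (fun v => σ v ≠ τ v)).card =
      ∑ z ∈ Finset.range (n + 1), (n.choose z : ℝ) * F z := by
  classical
  have h := Finset.sum_powerset_apply_card F (x := (Finset.univ : Finset (Fin n)))
  simp only [Finset.powerset_univ, Finset.card_univ, Fintype.card_fin, nsmul_eq_mul] at h
  rw [← h]
  refine Finset.sum_bij' (fun σ _ => Finset.univ.filter (fun v => σ v ≠ τ v))
    (fun S _ => fun v => if v ∈ S then !(τ v) else τ v) ?_ ?_ ?_ ?_ ?_
  · simp
  · simp
  · intro σ _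
    funext v
    simp only [Finset.mem_filter, Finset.mem_univ, true_and]
    cases h1 : σ v <;> cases h2 : τ v <;> simp
  · intro S _
    ext v
    by_cases hv : v ∈ S <;> simp [hv]
  · intro σ _; rfl

/-- The weighted count. -/
noncomputable def auxX {n k m : ℕ} (Φ : Fin m → Fin k → Fin n × Bool) : ℝ :=
  ∑ σ : Fin n → Bool, ∏ j, auxF σ (Φ j)

lemma auxX_sum {n k m : ℕ} :
    ∑ Φ : Fin m → Fin k → Fin n × Bool, auxX Φ = 2 ^ n * ((2 * n : ℝ) ^ k) ^ m := by
  classical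
  unfold auxX
  rw [Finset.sum_comm]
  have : ∀ σ : Fin n → Bool, ∑ Φ : Fin m → Fin k → Fin n × Bool, ∏ j, auxF σ (Φ j) =
      ((2 * n : ℝ) ^ k) ^ m := by
    intro σ
    rw [← Fintype.prod_sum (fun (_ : Fin m) (c : Fin k → Fin n × Bool) => auxF σ c)]
    simp [auxF_sum]
  rw [Finset.sum_congr rfl (fun σ _ => this σ)]
  simp

lemma auxX_sum2 {n k m : ℕ} (hn : 0 < n) (hk : 3 ≤ k) :
    ∑ Φ : Fin m → Fin k → Fin n × Bool, auxX Φ ^ 2 ≤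
      (2 ^ n) ^ 2 * ((2 * n : ℝ) ^ k) ^ m * auxQ (auxN k) n m := by
  classical
  have hN := auxN_pos k hk
  have hn' : (0:ℝ) < n := by exact_mod_cast hn
  have h1 : ∀ σ τ : Fin n → Bool, ∑ Φ : Fin m → Fin k → Fin n × Bool,
      (∏ j, auxF σ (Φ j)) * (∏ j, auxF τ (Φ j)) ≤ ((2 * n : ℝ) ^ k) ^ m *
        (1 + |1 - 2 * ((Finset.univ.filter (fun v => σ v ≠ τ v)).card : ℝ) / n| ^ 3 / auxN k) ^ m := by
    intro σ τ
    simp_rw [← Finset.prod_mul_distrib]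
    rw [← Fintype.prod_sum (fun (_ : Fin m) (c : Fin k → Fin n × Bool) => auxF σ c * auxF τ c)]
    rw [auxF_sum2 hn, Finset.prod_const, Finset.card_univ, Fintype.card_fin, mul_pow]
    apply mul_le_mul_of_nonneg_left _ (by positivity)
    refine (le_abs_self _).trans ?_
    rw [abs_pow, auxR_eq hn]
    apply pow_le_pow_left₀ (abs_nonneg _)
    apply auxA_bound hk
    have hc : ((Finset.univ.filter (fun v => σ v ≠ τ v)).card : ℝ) ≤ n := by
      have := Finset.card_le_univ (Finset.univ.filter (fun v => σ v ≠ τ v))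
      rw [Fintype.card_fin] at this
      exact_mod_cast this
    have h2 : ((Finset.univ.filter (fun v => σ v ≠ τ v)).card : ℝ) / n ≤ 1 := by
      rw [div_le_one hn']; exact hc
    have h3 : 0 ≤ ((Finset.univ.filter (fun v => σ v ≠ τ v)).card : ℝ) / n := by positivity
    rw [abs_le, mul_div_assoc]
    constructor <;> linarith
  have h2 : ∑ Φ : Fin m → Fin k → Fin n × Bool, auxX Φ ^ 2 =
      ∑ τ : Fin n → Bool, ∑ σ : Fin n → Bool, ∑ Φ : Fin m → Fin k → Fin n × Bool,
      (∏ j, auxF σ (Φ j)) * (∏ j, auxF τ (Φ j)) := by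
    unfold auxX
    simp_rw [sq, Finset.sum_mul_sum]
    rw [Finset.sum_comm, Finset.sum_comm]
    rw [Finset.sum_comm]
    conv_rhs => rw [Finset.sum_comm]
    apply Finset.sum_congr rfl
    intro σ _
    rw [Finset.sum_comm]
  rw [h2]
  refine (Finset.sum_le_sum (fun τ _ => Finset.sum_le_sum (fun σ _ => h1 σ τ))).trans ?_
  have h3 : ∀ τ : Fin n → Bool, ∑ σ : Fin n → Bool, ((2 * n : ℝ) ^ k) ^ m *
        (1 + |1 - 2 * ((Finset.univ.filter (fun v => σ v ≠ τ v)).card : ℝ) / n| ^ 3 / auxN k) ^ m =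
      2 ^ n * ((2 * n : ℝ) ^ k) ^ m * auxQ (auxN k) n m := by
    intro τ
    rw [← Finset.mul_sum, aux_count τ (fun z => (1 + |1 - 2 * (z : ℝ) / n| ^ 3 / auxN k) ^ m)]
    unfold auxQ
    simp_rw [div_mul_eq_mul_div]
    rw [← Finset.sum_div]
    field_simp
  rw [Finset.sum_congr rfl (fun τ _ => h3 τ)]
  simp only [Finset.sum_const, Finset.card_univ, Fintype.card_fun, Fintype.card_fin,
    Fintype.card_bool, nsmul_eq_mul]
  push_cast
  apply le_of_eq
  ring

lemma auxX_zero {n k m : ℕ} (hn : 0 < n) (hk : 3 ≤ k) (U : Finset (Fin m → Fin k → Fin n × Bool))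
    (hU : ∀ Φ ∈ U, auxX Φ = 0) :
    (U.card : ℝ) ≤ ((2 * n : ℝ) ^ k) ^ m * (auxQ (auxN k) n m - 1) := by
  classical
  have h1 : ∑ Φ : Fin m → Fin k → Fin n × Bool, (auxX Φ - 2 ^ n) ^ 2 =
      ∑ Φ : Fin m → Fin k → Fin n × Bool, auxX Φ ^ 2 - (2 ^ n) ^ 2 * ((2 * n : ℝ) ^ k) ^ m := by
    have : ∀ Φ : Fin m → Fin k → Fin n × Bool, (auxX Φ - 2 ^ n) ^ 2 =
      auxX Φ ^ 2 - 2 * 2 ^ n * auxX Φ + (2 ^ n) ^ 2 := fun Φ => by ring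
    rw [Finset.sum_congr rfl (fun Φ _ => this Φ), Finset.sum_add_distrib, Finset.sum_sub_distrib,
      ← Finset.mul_sum, auxX_sum]
    simp only [Finset.sum_const, Finset.card_univ, Fintype.card_fun, Fintype.card_fin,
      Fintype.card_bool, Fintype.card_prod, nsmul_eq_mul]
    push_cast
    ring
  have h2 : (U.card : ℝ) * (2 ^ n) ^ 2 ≤ ∑ Φ : Fin m → Fin k → Fin n × Bool, (auxX Φ - 2 ^ n) ^ 2 := by
    calc (U.card : ℝ) * (2 ^ n) ^ 2 = ∑ Φ ∈ U, (auxX Φ - 2 ^ n) ^ 2 := by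
          rw [Finset.sum_congr rfl (fun Φ h => by rw [hU Φ h, zero_sub, neg_sq])]
          simp
      _ ≤ _ := Finset.sum_le_sum_of_subset_of_nonneg (Finset.subset_univ _)
          (fun _ _ _ => sq_nonneg _)
  have h3 := auxX_sum2 (m := m) hn hk
  have h4 : (0:ℝ) < (2 ^ n) ^ 2 := by positivity
  refine le_of_mul_le_mul_right ?_ h4
  nlinarith

open Classical in
/-- The finset of proper clauses. -/
noncomputable def auxP (n k : ℕ) : Finset (Finset (Fin n × Bool)) :=
  Finset.univ.filter (IsProperClause n k)

lemma auxP_card (n k : ℕ) : (auxP n k).card = 2 ^ k * n.choose k := by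
  classical
  have h1 : ((Finset.powersetCard k (Finset.univ : Finset (Fin n))).sigma
      (fun S => S.powerset)).card = 2 ^ k * n.choose k := by
    rw [Finset.card_sigma, Finset.sum_congr rfl (fun S hS => by
      rw [Finset.card_powerset, (Finset.mem_powersetCard.1 hS).2])]
    simp [mul_comm]
  rw [← h1]
  refine Finset.card_bij' (fun C _ => ⟨C.image Prod.fst, Finset.univ.filter (fun v => (v, true) ∈ C)⟩)
    (fun p _ => Finset.univ.filter (fun l : Fin n × Bool => l.1 ∈ p.1 ∧ (l.2 = true ↔ l.1 ∈ p.2)))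
    ?_ ?_ ?_ ?_
  · intro C hC
    simp only [auxP, Finset.mem_filter, Finset.mem_univ, true_and, IsProperClause] at hC
    simp only [Finset.mem_sigma, Finset.mem_powersetCard, Finset.subset_univ, true_and,
      Finset.mem_powerset]
    refine ⟨hC.2, ?_⟩
    intro v hv
    exact Finset.mem_image.2 ⟨(v, true), by simpa using hv, rfl⟩
  · rintro ⟨S, T⟩ h
    simp only [Finset.mem_sigma, Finset.mem_powersetCard, Finset.subset_univ, true_and,
      Finset.mem_powerset] at h
    simp only [auxP, Finset.mem_filter, Finset.mem_univ, true_and, IsProperClause]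
    have him : (Finset.univ.filter
        (fun l : Fin n × Bool => l.1 ∈ S ∧ (l.2 = true ↔ l.1 ∈ T))).image Prod.fst = S := by
      ext v
      simp only [Finset.mem_image, Finset.mem_filter, Finset.mem_univ, true_and]
      constructor
      · rintro ⟨l, hl, rfl⟩; exact hl.1
      · intro hv
        exact ⟨(v, decide (v ∈ T)), by simp [hv], rfl⟩
    refine ⟨?_, by rw [him]; exact h.1⟩
    rw [← h.1]
    refine Eq.trans ?_ (congrArg Finset.card him)
    symm
    apply Finset.card_image_of_injOn
    rintro ⟨v, b⟩ hl ⟨v', b'⟩ hl' hv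
    simp only [Finset.coe_filter, Finset.mem_univ, true_and, Set.mem_ofPred_eq] at hl hl' hv
    subst hv
    have : b = b' := by
      rw [Bool.eq_iff_iff, hl.2, hl'.2]
    rw [this]
  · intro C hC
    simp only [auxP, Finset.mem_filter, Finset.mem_univ, true_and, IsProperClause] at hC
    have hinj : Set.InjOn Prod.fst (C : Set (Fin n × Bool)) :=
      Finset.card_image_iff.1 (hC.2.trans hC.1.symm)
    ext ⟨v, b⟩
    simp only [Finset.mem_filter, Finset.mem_univ, true_and, Finset.mem_image]
    constructor
    · rintro ⟨⟨⟨v', b'⟩, hl, hv⟩, hb⟩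
      simp only at hv
      subst hv
      cases b <;> cases b' <;> simp_all
    · intro h
      refine ⟨⟨(v, b), h, rfl⟩, ?_⟩
      constructor
      · rintro rfl; exact h
      · intro h'
        have := hinj h h' rfl
        simpa using this
  · rintro ⟨S, T⟩ h
    simp only [Finset.mem_sigma, Finset.mem_powersetCard, Finset.subset_univ, true_and,
      Finset.mem_powerset] at h
    have him : (Finset.univ.filter
        (fun l : Fin n × Bool => l.1 ∈ S ∧ (l.2 = true ↔ l.1 ∈ T))).image Prod.fst = S := by
      ext v
      simp only [Finset.mem_image, Finset.mem_filter, Finset.mem_univ, true_and]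
      constructor
      · rintro ⟨l, hl, rfl⟩; exact hl.1
      · intro hv
        exact ⟨(v, decide (v ∈ T)), by simp [hv], rfl⟩
    have hT : Finset.univ.filter (fun v => (v, true) ∈ (Finset.univ.filter
        (fun l : Fin n × Bool => l.1 ∈ S ∧ (l.2 = true ↔ l.1 ∈ T)))) = T := by
      ext v
      simp only [Finset.mem_filter, Finset.mem_univ, true_and, true_iff]
      exact ⟨fun h => h.2, fun hv => ⟨h.2 hv, hv⟩⟩
    simp only [him, hT]

/-- The tuple of tuples of literals attached to an enumerated formula. -/
def auxG {n k m : ℕ} (F : Finset (Finset (Fin n × Bool))) (e : Fin m ≃ {x // x ∈ F})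
    (d : ∀ C : {x // x ∈ F}, Fin k ≃ {l // l ∈ C.1}) : Fin m → Fin k → Fin n × Bool :=
  fun j i => (d (e j) i).1

lemma auxG_image {n k m : ℕ} (F : Finset (Finset (Fin n × Bool))) (e : Fin m ≃ {x // x ∈ F})
    (d : ∀ C : {x // x ∈ F}, Fin k ≃ {l // l ∈ C.1}) (j : Fin m) :
    Finset.univ.image (auxG F e d j) = (e j).1 := by
  ext l
  simp only [Finset.mem_image, Finset.mem_univ, true_and, auxG]
  constructor
  · rintro ⟨i, rfl⟩; exact (d (e j) i).2
  · intro hl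
    exact ⟨(d (e j)).symm ⟨l, hl⟩, by simp⟩

lemma auxG_image2 {n k m : ℕ} (F : Finset (Finset (Fin n × Bool))) (e : Fin m ≃ {x // x ∈ F})
    (d : ∀ C : {x // x ∈ F}, Fin k ≃ {l // l ∈ C.1}) :
    Finset.univ.image (fun j => Finset.univ.image (auxG F e d j)) = F := by
  ext C
  simp only [Finset.mem_image, Finset.mem_univ, true_and, auxG_image]
  constructor
  · rintro ⟨i, rfl⟩; exact (e i).2
  · intro hl
    exact ⟨e.symm ⟨C, hl⟩, by simp⟩

lemma auxG_zero {n k m : ℕ} (hk : 3 ≤ k) (F : Finset (Finset (Fin n × Bool)))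
    (e : Fin m ≃ {x // x ∈ F})
    (d : ∀ C : {x // x ∈ F}, Fin k ≃ {l // l ∈ C.1}) (hF : ¬ IsSatisfiable F) :
    auxX (auxG F e d) = 0 := by
  unfold auxX
  apply Finset.sum_eq_zero
  intro σ _
  unfold IsSatisfiable at hF
  push Not at hF
  obtain ⟨C, hC, hσ⟩ := hF σ
  apply Finset.prod_eq_zero (Finset.mem_univ (e.symm ⟨C, hC⟩))
  apply auxF_zero hk
  intro i h
  apply hσ
  refine ⟨_, ?_, h⟩
  have := auxG_image F e d (e.symm ⟨C, hC⟩)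
  simp only [Equiv.apply_symm_apply] at this
  exact this.subset (Finset.mem_image_of_mem _ (Finset.mem_univ i))

open Classical in
lemma aux_unsat {n k m : ℕ} (hn : 0 < n) (hk : 3 ≤ k) :
    ((((auxP n k).powersetCard m).filter (fun F => ¬ IsSatisfiable F)).card : ℝ) *
      (m.factorial * (k.factorial) ^ m : ℕ) ≤ ((2 * n : ℝ) ^ k) ^ m * (auxQ (auxN k) n m - 1) := by
  set U := ((auxP n k).powersetCard m).filter (fun F => ¬ IsSatisfiable F) with hU
  have hUm : ∀ F ∈ U, F.card = m ∧ (∀ C ∈ F, C.card = k) ∧ ¬ IsSatisfiable F := by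
    intro F hF
    rw [hU, Finset.mem_filter, Finset.mem_powersetCard] at hF
    refine ⟨hF.1.2, ?_, hF.2⟩
    intro C hC
    have := hF.1.1 hC
    rw [auxP, Finset.mem_filter] at this
    exact this.2.1
  let UT : Finset (Fin m → Fin k → Fin n × Bool) := Finset.univ.filter (fun Φ => auxX Φ = 0)
  refine le_trans ?_ (auxX_zero hn hk UT (fun Φ h => (Finset.mem_filter.1 h).2))
  let A := Σ F : {F // F ∈ U}, (Fin m ≃ {x // x ∈ F.1}) × (∀ C : {x // x ∈ F.1}, Fin k ≃ {l // l ∈ C.1})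
  have hA : Fintype.card A = U.card * (m.factorial * k.factorial ^ m) := by
    rw [Fintype.card_sigma]
    have : ∀ F : {F // F ∈ U}, Fintype.card ((Fin m ≃ {x // x ∈ F.1}) ×
        (∀ C : {x // x ∈ F.1}, Fin k ≃ {l // l ∈ C.1})) = m.factorial * k.factorial ^ m := by
      intro F
      obtain ⟨h1, h2, _⟩ := hUm F.1 F.2
      rw [Fintype.card_prod, Fintype.card_pi]
      have e1 : Fin m ≃ {x // x ∈ F.1} := Fintype.equivOfCardEq (by simp [h1])
      rw [Fintype.card_equiv e1, Fintype.card_fin]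
      congr 1
      rw [Finset.prod_congr rfl (fun C _ => by
        have e2 : Fin k ≃ {l // l ∈ C.1} := Fintype.equivOfCardEq (by simp [h2 C.1 C.2])
        rw [Fintype.card_equiv e2, Fintype.card_fin])]
      simp [h1]
    rw [Finset.sum_congr rfl (fun F _ => this F)]
    simp
  have hinj : Fintype.card A ≤ Fintype.card {Φ // Φ ∈ UT} := by
    apply Fintype.card_le_of_injective (fun a : A => (⟨auxG a.1.1 a.2.1 a.2.2, by
      simp only [UT, Finset.mem_filter, Finset.mem_univ, true_and]
      exact auxG_zero hk _ _ _ (hUm a.1.1 a.1.2).2.2⟩ : {Φ // Φ ∈ UT}))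
    rintro ⟨⟨F, hF⟩, e, d⟩ ⟨⟨F', hF'⟩, e', d'⟩ h
    simp only [Subtype.mk.injEq] at h
    have hFF : F = F' := by
      rw [← auxG_image2 F e d, ← auxG_image2 F' e' d', h]
    subst hFF
    have hee : e = e' := by
      ext1 j
      apply Subtype.ext
      rw [← auxG_image F e d, ← auxG_image F e' d', h]
    subst hee
    have hdd : d = d' := by
      funext C
      ext1 i
      apply Subtype.ext
      have := congrFun (congrFun h (e.symm C)) i
      simp only [auxG] at this
      rw [Equiv.apply_symm_apply] at this
      exact this
    rw [hdd]
  rw [hA, Fintype.card_coe] at hinj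
  exact_mod_cast hinj

lemma aux_total (k : ℕ) (hk : 3 ≤ k) (r : ℝ) (hr0 : 0 < r) (n : ℕ) (m : ℕ) (hm : (m:ℝ) ≤ r * n)
    (hkn : k ≤ n) (hn : 2 * (k ^ 2 + k.factorial * r) ≤ n) :
    Real.exp (-(2 * (k ^ 2 + k.factorial * r) * r)) * ((2 * n : ℝ) ^ k) ^ m ≤
      ((2 ^ k * n.choose k).choose m : ℝ) * (m.factorial * (k.factorial) ^ m : ℕ) := by
  set A : ℝ := k ^ 2 + k.factorial * r with hA
  set P := 2 ^ k * n.choose k with hP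
  have hn1 : (1:ℝ) ≤ n := by exact_mod_cast (by omega : 1 ≤ n)
  have hn0 : (0:ℝ) < n := by linarith
  have hA0 : 0 < A := by positivity
  have hkn' : (k:ℝ) ≤ n := by exact_mod_cast hkn
  have hd : ((P - m : ℕ) : ℝ) ^ m ≤ (P.choose m : ℝ) * m.factorial := by
    have h1 : (P + 1 - m) ^ m ≤ P.descFactorial m := Nat.pow_sub_le_descFactorial P m
    have h2 : (P - m) ^ m ≤ P.choose m * m.factorial := by
      rw [mul_comm, ← Nat.descFactorial_eq_factorial_mul_choose]
      exact (Nat.pow_le_pow_left (by omega) m).trans h1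
    exact_mod_cast h2
  have hb : (2 * n : ℝ) ^ k * (1 - A / n) ≤ ((P - m : ℕ) : ℝ) * k.factorial := by
    have h1 : ((P:ℝ) - m) ≤ ((P - m : ℕ) : ℝ) := by
      rw [sub_le_iff_le_add]; exact_mod_cast (by omega : P ≤ P - m + m)
    have h2 : (2 * n : ℝ) ^ k * (1 - k ^ 2 / n) ≤ (P:ℝ) * k.factorial := by
      have h3 : (n + 1 - k) ^ k ≤ n.descFactorial k := Nat.pow_sub_le_descFactorial n k
      have h4 : (n - k) ^ k ≤ n.choose k * k.factorial := by
        rw [mul_comm, ← Nat.descFactorial_eq_factorial_mul_choose]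
        exact (Nat.pow_le_pow_left (by omega) k).trans h3
      have h5 : ((n:ℝ) - k) ^ k ≤ (n.choose k : ℝ) * k.factorial := by
        rw [← Nat.cast_sub hkn]; exact_mod_cast h4
      have h6 : (1 - (k:ℝ) ^ 2 / n) ≤ (1 - (k:ℝ) / n) ^ k := by
        have h7 : (k:ℝ) / n ≤ 1 := by rw [div_le_one hn0]; exact hkn'
        have := one_add_mul_le_pow (a := -((k:ℝ) / n)) (by linarith) k
        rw [← sub_eq_add_neg] at this
        refine le_trans (le_of_eq ?_) this
        ring
      calc (2 * n : ℝ) ^ k * (1 - k ^ 2 / n) ≤ (2 * n : ℝ) ^ k * (1 - (k:ℝ) / n) ^ k :=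
            mul_le_mul_of_nonneg_left h6 (by positivity)
        _ = 2 ^ k * ((n:ℝ) - k) ^ k := by
            rw [← mul_pow, ← mul_pow]; congr 1; field_simp
        _ ≤ 2 ^ k * ((n.choose k : ℝ) * k.factorial) := mul_le_mul_of_nonneg_left h5 (by positivity)
        _ = _ := by rw [hP]; push_cast; ring
    have h3 : (m:ℝ) * k.factorial ≤ (2 * n : ℝ) ^ k * (k.factorial * r / n) := by
      have h4 : (n:ℝ) ^ 2 ≤ (2 * n : ℝ) ^ k :=
        (pow_le_pow_left₀ hn0.le (by linarith) 2).trans (pow_le_pow_right₀ (by linarith) (by omega))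
      calc (m:ℝ) * k.factorial ≤ (r * n) * k.factorial :=
            mul_le_mul_of_nonneg_right hm (by positivity)
        _ = (n:ℝ) ^ 2 * (k.factorial * r / n) := by field_simp
        _ ≤ _ := mul_le_mul_of_nonneg_right h4 (by positivity)
    have h4 := mul_le_mul_of_nonneg_right h1 (by positivity : (0:ℝ) ≤ k.factorial)
    have h5 : (2 * n : ℝ) ^ k * (1 - A / n) =
      (2 * n : ℝ) ^ k * (1 - k ^ 2 / n) - (2 * n : ℝ) ^ k * (k.factorial * r / n) := by
      rw [hA]; ring
    rw [h5]
    linarith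
  have hx : A / n ≤ 1 / 2 := by
    rw [div_le_iff₀ hn0]; linarith
  have hx0 : 0 < A / n := by positivity
  have hexp : Real.exp (-(2 * (A / n))) ≤ 1 - A / n := by
    have h1 : 1 + 2 * (A / n) ≤ Real.exp (2 * (A / n)) := by
      have := Real.add_one_le_exp (2 * (A / n)); linarith
    rw [Real.exp_neg, inv_le_comm₀ (Real.exp_pos _) (by linarith)]
    refine le_trans ?_ h1
    rw [inv_le_iff_one_le_mul₀ (by linarith)]
    nlinarith
  have hexpm : Real.exp (-(2 * A * r)) ≤ (1 - A / n) ^ m := by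
    calc Real.exp (-(2 * A * r)) ≤ Real.exp (m * (-(2 * (A / n)))) := by
          apply Real.exp_le_exp.2
          have := mul_le_mul_of_nonneg_right hm (by positivity : 0 ≤ 2 * (A / n))
          have e : r * n * (2 * (A / n)) = 2 * A * r := by field_simp
          linarith
      _ = Real.exp (-(2 * (A / n))) ^ m := Real.exp_nat_mul _ _
      _ ≤ _ := pow_le_pow_left₀ (Real.exp_pos _).le hexp m
  calc Real.exp (-(2 * A * r)) * ((2 * n : ℝ) ^ k) ^ m ≤ (1 - A / n) ^ m * ((2 * n : ℝ) ^ k) ^ m :=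
        mul_le_mul_of_nonneg_right hexpm (by positivity)
    _ = ((2 * n : ℝ) ^ k * (1 - A / n)) ^ m := by rw [← mul_pow, mul_comm]
    _ ≤ (((P - m : ℕ) : ℝ) * k.factorial) ^ m :=
        pow_le_pow_left₀ (mul_nonneg (by positivity) (by linarith)) hb m
    _ = ((P - m : ℕ) : ℝ) ^ m * (k.factorial : ℝ) ^ m := mul_pow _ _ _
    _ ≤ ((P.choose m : ℝ) * m.factorial) * (k.factorial : ℝ) ^ m :=
        mul_le_mul_of_nonneg_right hd (by positivity)
    _ = _ := by push_cast; ring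

/-- For all `k ≥ 3` and `0 < r ≤ 2^(k-1) ln 2 - 2`, the probability that a uniformly
random `k`-CNF formula with `⌊rn⌋` clauses is satisfiable tends to `1` as `n → ∞`. -/
theorem ksat_satisfiable_whp (k : ℕ) (hk : 3 ≤ k) (r : ℝ) (hr0 : 0 < r)
    (hr : r ≤ 2 ^ (k - 1) * Real.log 2 - 2) :
    Filter.Tendsto
      (fun n : ℕ =>
        (Nat.card {F : Finset (Finset (Fin n × Bool)) //
            F.card = ⌊r * (n : ℝ)⌋₊ ∧ (∀ C ∈ F, IsProperClause n k C) ∧ IsSatisfiable F} : ℝ) /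
          (Nat.choose (2 ^ k * Nat.choose n k) ⌊r * (n : ℝ)⌋₊ : ℝ))
      Filter.atTop (nhds 1) := by
  classical
  set A : ℝ := k ^ 2 + k.factorial * r with hA
  set c : ℝ := Real.exp (-(2 * A * r)) with hc
  have hc0 : 0 < c := Real.exp_pos _
  have hlim := aux_lim r
  have hlow : Filter.Tendsto (fun n : ℕ => 1 - ((Real.exp (r * n * ((n:ℝ) ^ (-(2:ℝ)/5)) ^ 3) +
    (n + 1) * Real.exp (- (n * ((n:ℝ) ^ (-(2:ℝ)/5)) ^ 2 / 1000))) - 1) / c)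
      Filter.atTop (nhds 1) := by
    have := ((hlim.sub_const 1).div_const c).const_sub 1
    simpa using this
  have hcount : ∀ n m : ℕ, (Nat.card {F : Finset (Finset (Fin n × Bool)) //
            F.card = m ∧ (∀ C ∈ F, IsProperClause n k C) ∧ IsSatisfiable F} : ℝ) +
      ((((auxP n k).powersetCard m).filter (fun F => ¬ IsSatisfiable F)).card : ℝ) =
      ((2 ^ k * n.choose k).choose m : ℝ) := by
    intro n m
    have h1 : Nat.card {F : Finset (Finset (Fin n × Bool)) //
            F.card = m ∧ (∀ C ∈ F, IsProperClause n k C) ∧ IsSatisfiable F} =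
        (((auxP n k).powersetCard m).filter (fun F => IsSatisfiable F)).card := by
      apply Nat.subtype_card
      intro F
      simp only [Finset.mem_filter, Finset.mem_powersetCard, auxP, Finset.subset_iff,
        Finset.mem_univ, true_and]
      tauto
    rw [h1]
    have h2 := Finset.card_filter_add_card_filter_not (s := (auxP n k).powersetCard m)
      (fun F => IsSatisfiable F)
    rw [Finset.card_powersetCard, auxP_card] at h2
    exact_mod_cast h2
  have hev : ∀ᶠ n : ℕ in Filter.atTop, k ≤ n ∧ 2 * A ≤ (n:ℝ) := by
    filter_upwards [Filter.eventually_ge_atTop k,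
      tendsto_natCast_atTop_atTop.eventually (Filter.eventually_ge_atTop (2 * A))] with n h1 h2
    exact ⟨h1, h2⟩
  refine tendsto_of_tendsto_of_tendsto_of_le_of_le' hlow tendsto_const_nhds ?_ ?_
  · filter_upwards [hev] with n hn
    obtain ⟨hkn, hAn⟩ := hn
    have hn : 0 < n := by omega
    have hn' : (0:ℝ) < n := by exact_mod_cast hn
    set m := ⌊r * (n : ℝ)⌋₊ with hm
    have hmr : (m:ℝ) ≤ r * n := Nat.floor_le (by positivity)
    have hQ := aux_Q_le k hk (auxN k) (auxN_ge k) (auxN_pos k hk) r hr0 hr n m hn hmr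
      ((n:ℝ) ^ (-(2:ℝ)/5)) (by positivity)
    have hU := aux_unsat (m := m) hn hk
    have hT := aux_total k hk r hr0 n m hmr hkn hAn
    have hC := hcount n m
    set q := Real.exp (r * n * ((n:ℝ) ^ (-(2:ℝ)/5)) ^ 3) +
      (n + 1) * Real.exp (- (n * ((n:ℝ) ^ (-(2:ℝ)/5)) ^ 2 / 1000))
    set u := ((((auxP n k).powersetCard m).filter (fun F => ¬ IsSatisfiable F)).card : ℝ)
    set W := ((2 ^ k * n.choose k).choose m : ℝ)
    set K : ℝ := ((m.factorial * (k.factorial) ^ m : ℕ) : ℝ)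
    set M := ((2 * n : ℝ) ^ k) ^ m
    have hM : 0 < M := by positivity
    have hK : 0 < K := by
      have : 0 < m.factorial * (k.factorial) ^ m := by positivity
      exact Nat.cast_pos.2 this
    have hW : 0 < W := by
      have h1 : 0 < W * K := lt_of_lt_of_le (mul_pos hc0 hM) hT
      exact pos_of_mul_pos_left h1 hK.le
    have hu0 : 0 ≤ u := Nat.cast_nonneg _
    have huK : u * K ≤ M * (q - 1) :=
      hU.trans (mul_le_mul_of_nonneg_left (by linarith) hM.le)
    have hq0 : 0 ≤ q - 1 := by
      have : 0 ≤ M * (q - 1) := le_trans (by positivity) huK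
      exact nonneg_of_mul_nonneg_right this hM
    have hfin : u ≤ (q - 1) / c * W := by
      refine le_of_mul_le_mul_right ?_ hK
      calc u * K ≤ M * (q - 1) := huK
        _ = (q - 1) / c * (c * M) := by field_simp
        _ ≤ (q - 1) / c * (W * K) := mul_le_mul_of_nonneg_left hT (by positivity)
        _ = _ := by ring
    rw [le_div_iff₀ hW]
    linarith
  · filter_upwards with n
    have hC := hcount n ⌊r * (n : ℝ)⌋₊
    apply div_le_one_of_le₀ _ (Nat.cast_nonneg _)
    rw [← hC]
    exact le_add_of_nonneg_right (Nat.cast_nonneg _)
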